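/- Let G be a finite group with π_e(G) ⊆ {1,2,3,4,6} which has exactly three cyclic subgroups of order 6, and suppose two of these cyclic subgroups of order 6 intersect in a subgroup of order 3. Then G is isomorphic to one of the following: Z_2 × Z_6; Z_3 × S_3; Z_2 × Dic_3 (where Dic_3 is the dicyclic group of order 12, i.e. Z_3 ⋊ Z_4); a semidirect product (Z_6 × Z_2) ⋊_φ Z_2 for some action φ of Z_2 on Z_6 × Z_2; Z_2 × Z_2 × S_3; Z_3 × A_4; or a semidirect product (Z_3 × A_4) ⋊_φ Z_2 for some action φ of Z_2 on Z_3 × A_4. -/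

import Mathlib

/-!
Two cyclic subgroups of order 6 meeting in `⟨c⟩` of order 3 are `⟨c * s⟩` and `⟨c * t⟩` for
involutions `s`, `t` commuting with `c`. Either `s * t` or a conjugate is a third such involution,
so the three cyclic subgroups of order 6 are all of this form and `⟨c⟩` is normal; hence the
centralizer `C` of `c` has index at most 2.

If two of the three involutions do not commute, they generate an `S_3` which is normalized with
only inner automorphisms and has centralizer `⟨c⟩`, so `G = ⟨c⟩ × S_3`. Otherwise they form with
`1` a normal four-group `V`, and an element of `C` commuting with one of them lies in `⟨c⟩ × V`.
Hence `C` is `⟨c⟩ × V`, or some `q` in `C` of order 3 permutes the involutions cyclically and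
`C = ⟨c⟩ × (V ⋊ ⟨q⟩)` with `V ⋊ ⟨q⟩ ≃ A_4`. An involution outside `C` splits `G` over `C`.
If there is none although `C ≠ G`, every `g` outside `C` has order 4 and centralizes `V`, which
forces `C = ⟨c⟩ × V`; then `⟨c * g ^ 2, g⟩` is dicyclic of order 12 and an involution of `V` other
than `g ^ 2` generates a complementary direct factor.
-/

section Centralizers

variable {G : Type*} [Group G]

theorem mem_centralizer_singleton_iff_commute {c g : G} :
    g ∈ Subgroup.centralizer {c} ↔ Commute c g :=
  Subgroup.mem_centralizer_singleton_iff.trans eq_comm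

theorem commute_of_mem_zpowers {c x g : G} (hx : x ∈ Subgroup.zpowers c)
    (hg : Commute c g) : Commute x g := by
  obtain ⟨k, rfl⟩ := hx
  exact hg.zpow_left k

theorem semiconjBy_inv_of_mem_zpowers_mul {s t n : G} (hs : s * s = 1)
    (ht : t * t = 1) (hn : n ∈ Subgroup.zpowers (s * t)) : SemiconjBy s n n⁻¹ := by
  obtain ⟨k, rfl⟩ := hn
  have h : SemiconjBy s (s * t) (s * t)⁻¹ := by
    rw [SemiconjBy, mul_inv_rev, inv_eq_of_mul_eq_one_left hs, inv_eq_of_mul_eq_one_left ht,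
      mul_assoc t s s, hs, ← mul_assoc, hs, one_mul, mul_one]
  rw [← inv_zpow]
  exact h.zpow_right k

theorem commute_self_mul_iff {s t : G} :
    Commute s (s * t) ↔ Commute s t := by
  rw [commute_iff_eq, mul_assoc, mul_right_inj, commute_iff_eq]

theorem disjoint_zpowers_left_of_notMem {H : Subgroup G} {x : G}
    (hx : (orderOf x).Prime) (hxH : x ∉ H) : Disjoint (Subgroup.zpowers x) H := by
  rw [← Nat.card_zpowers] at hx
  have := Fact.mk hx
  have h := (H.subgroupOf (Subgroup.zpowers x)).eq_bot_or_eq_top_of_prime_card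
  rw [Subgroup.subgroupOf_eq_bot, Subgroup.subgroupOf_eq_top, Subgroup.zpowers_le] at h
  exact (h.resolve_right hxH).symm

end Centralizers

section InternalProduct

variable {G : Type*} [Group G] {H K : Subgroup G}

/-- Internal direct product: two subgroups which centralize each other and meet trivially
generate a copy of their product. -/
noncomputable def supMulEquivProd (hcomm : ∀ h ∈ H, ∀ k ∈ K, Commute h k) (hHK : Disjoint H K) :
    ↥(H ⊔ K) ≃* H × K :=
  have comm (h : H) (k : K) : Commute (H.subtype h) (K.subtype k) := hcomm h h.2 k k.2
  have range_eq : (MonoidHom.noncommCoprod H.subtype K.subtype comm).range = H ⊔ K := by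
    rw [MonoidHom.noncommCoprod_range, H.range_subtype, K.range_subtype]
  have injective : Function.Injective (MonoidHom.noncommCoprod H.subtype K.subtype comm) := by
    rw [MonoidHom.noncommCoprod_injective, H.range_subtype, K.range_subtype]
    exact ⟨H.subtype_injective, K.subtype_injective, hHK⟩
  ((MonoidHom.ofInjective injective).trans (MulEquiv.subgroupCongr range_eq)).symm

theorem disjoint_of_forall_commute_of_center_eq_bot (hcomm : ∀ h ∈ H, ∀ k ∈ K, Commute h k)
    (hK : Subgroup.center K = ⊥) : Disjoint H K := by
  rw [Subgroup.disjoint_def]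
  intro x hxH hxK
  have hx : (⟨x, hxK⟩ : K) ∈ Subgroup.center K :=
    Subgroup.mem_center_iff.2 fun k => Subtype.ext (hcomm x hxH k k.2).symm
  rw [hK, Subgroup.mem_bot] at hx
  exact congrArg Subtype.val hx

theorem natCard_sup_of_disjoint [H.Normal] (hHK : Disjoint H K) :
    Nat.card ↥(H ⊔ K) = Nat.card H * Nat.card K := by
  rw [← Subgroup.relIndex_bot_left, ← Subgroup.relIndex_mul_relIndex ⊥ H _ bot_le le_sup_left,
    Subgroup.relIndex_bot_left, Subgroup.relIndex_sup_left, ← Subgroup.inf_relIndex_right,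
    hHK.eq_bot, Subgroup.relIndex_bot_left]

theorem not_normal_subgroupOf_sup [H.Normal] (hHK : Disjoint H K) {h k : G} (hh : h ∈ H)
    (hk : k ∈ K) (hcomm : ¬ Commute h k) : ¬ (K.subgroupOf (H ⊔ K)).Normal := by
  intro hnormal
  have hdisj : Disjoint (H.subgroupOf (H ⊔ K)) (K.subgroupOf (H ⊔ K)) := by
    rw [Subgroup.disjoint_def] at hHK ⊢
    exact fun hxH hxK => Subtype.ext (hHK hxH hxK)
  have := Subgroup.commute_of_normal_of_disjoint _ _ inferInstance hnormal hdisj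
    ⟨h, le_sup_left (a := H) hh⟩ ⟨k, le_sup_right (b := K) hk⟩ hh hk
  exact hcomm (congrArg Subtype.val this)

theorem nonempty_mulEquiv_zmod_six_prod_zmod_two
    (hcomm : ∀ h ∈ H, ∀ k ∈ K, Commute h k) (hH : Nat.card H = 3)
    (hK : Nat.card K = 4) (hK2 : ∀ v ∈ K, v ^ 2 = 1) :
    Nonempty (↥(H ⊔ K) ≃* Multiplicative (ZMod 6) × Multiplicative (ZMod 2)) := by
  have hHK : Disjoint H K := Subgroup.disjoint_of_coprime_natCard (by rw [hH, hK]; decide)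
  have := Nat.finite_of_card_ne_zero (hK ▸ four_ne_zero)
  have : Nontrivial K := Finite.one_lt_card_iff_nontrivial.1 (by rw [hK]; decide)
  have : IsKleinFour K := ⟨hK, (Monoid.exponent_eq_prime_iff Nat.prime_two).2
    fun v hv => orderOf_eq_prime (Subtype.ext (hK2 v v.2)) hv⟩
  obtain ⟨f⟩ := IsKleinFour.nonempty_mulEquiv (G₁ := K) (G₂ := Multiplicative (ZMod 2 × ZMod 2))
  have e : H ≃* Multiplicative (ZMod 3) := mulEquivOfPrimeCardEq (p := 3) hH (by simp)
  have e6 : Multiplicative (ZMod 6) ≃* Multiplicative (ZMod 3) × Multiplicative (ZMod 2) :=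
    (ZMod.chineseRemainder (m := 3) (n := 2) (by decide)).toAddEquiv.toMultiplicative.trans
      (.prodMultiplicative _ _)
  exact ⟨(supMulEquivProd hcomm hHK).trans <|
    (e.prodCongr (f.trans (.prodMultiplicative _ _))).trans <|
    MulEquiv.prodAssoc.symm.trans (e6.symm.prodCongr (.refl _))⟩

end InternalProduct

section TrivialCenter

theorem center_eq_bot_of_mulEquiv {G H : Type*} [Group G] [Group H] (e : G ≃* H)
    (hH : Subgroup.center H = ⊥) : Subgroup.center G = ⊥ := by
  have : Subsingleton (Subgroup.center H) := hH ▸ inferInstance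
  have := (Subgroup.centerCongr e).toEquiv.subsingleton
  exact Subgroup.eq_bot_of_subsingleton _

theorem center_perm_fin_three : Subgroup.center (Equiv.Perm (Fin 3)) = ⊥ := by
  rw [Subgroup.eq_bot_iff_forall]
  simp only [Subgroup.mem_center_iff]
  decide

end TrivialCenter

section CosetAction

variable {G : Type*} [Group G] {H : Subgroup G}

theorem toPermHom_quotient_injective (hH : (Nat.card H).Prime) (hnormal : ¬ H.Normal) :
    Function.Injective (MulAction.toPermHom G (G ⧸ H)) := by
  rw [← MonoidHom.ker_eq_bot_iff, ← Subgroup.normalCore_eq_ker]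
  have hle := H.normalCore_le
  have := Fact.mk hH
  obtain h | h := (H.normalCore.subgroupOf H).eq_bot_or_eq_top_of_prime_card
  · rw [Subgroup.subgroupOf_eq_bot] at h
    exact h.eq_bot_of_le hle
  · rw [Subgroup.subgroupOf_eq_top] at h
    exact absurd (le_antisymm hle h ▸ H.normalCore_normal) hnormal

theorem nonempty_mulEquiv_perm_fin_three (hG : Nat.card G = 6) (hH : Nat.card H = 2)
    (hnormal : ¬ H.Normal) : Nonempty (G ≃* Equiv.Perm (Fin 3)) := by
  have hindex : Nat.card (G ⧸ H) = 3 := by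
    have := H.card_eq_card_quotient_mul_card_subgroup
    lia
  have := Nat.finite_of_card_ne_zero (hindex ▸ three_ne_zero)
  have e : G ⧸ H ≃ Fin 3 := Finite.equivFinOfCardEq hindex
  have hinj := toPermHom_quotient_injective (hH ▸ Nat.prime_two) hnormal
  have hbij : Function.Bijective (MulAction.toPermHom G (G ⧸ H)) := by
    rw [Nat.bijective_iff_injective_and_card, Nat.card_perm, hindex, hG]
    exact ⟨hinj, rfl⟩
  exact ⟨(MulEquiv.ofBijective _ hbij).trans e.permCongrHom⟩

theorem nonempty_mulEquiv_alternatingGroup_fin_four (hG : Nat.card G = 12)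
    (hH : Nat.card H = 3) (hnormal : ¬ H.Normal) : Nonempty (G ≃* alternatingGroup (Fin 4)) := by
  classical
  have hindex : Nat.card (G ⧸ H) = 4 := by
    have := H.card_eq_card_quotient_mul_card_subgroup
    lia
  have := Nat.finite_of_card_ne_zero (hindex ▸ four_ne_zero)
  have e : G ⧸ H ≃ Fin 4 := Finite.equivFinOfCardEq hindex
  set f : G →* Equiv.Perm (Fin 4) :=
    e.permCongrHom.toMonoidHom.comp (MulAction.toPermHom G (G ⧸ H))
  have hinj : Function.Injective f :=
    e.permCongrHom.injective.comp (toPermHom_quotient_injective (hH ▸ Nat.prime_three) hnormal)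
  have hrange : f.range = alternatingGroup (Fin 4) := by
    apply Equiv.Perm.eq_alternatingGroup_of_index_eq_two
    have hcard := f.range.card_mul_index
    rw [← Nat.card_congr (MonoidHom.ofInjective hinj).toEquiv, hG, Nat.card_perm,
      Nat.card_fin] at hcard
    have : Nat.factorial 4 = 24 := rfl
    lia
  exact ⟨(MonoidHom.ofInjective hinj).trans (MulEquiv.subgroupCongr hrange)⟩

theorem nonempty_sup_mulEquiv_perm_fin_three {K : Subgroup G} [H.Normal] (hH : Nat.card H = 3)
    (hK : Nat.card K = 2) {h k : G} (hh : h ∈ H) (hk : k ∈ K) (hhk : ¬ Commute h k) :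
    Nonempty (↥(H ⊔ K) ≃* Equiv.Perm (Fin 3)) := by
  have hHK : Disjoint H K := Subgroup.disjoint_of_coprime_natCard (by rw [hH, hK]; decide)
  refine nonempty_mulEquiv_perm_fin_three ?_ ?_ (not_normal_subgroupOf_sup hHK hh hk hhk)
  · rw [natCard_sup_of_disjoint hHK, hH, hK]
  · rw [Nat.card_congr (Subgroup.subgroupOfEquivOfLe le_sup_right).toEquiv, hK]

theorem nonempty_sup_mulEquiv_alternatingGroup_fin_four {K : Subgroup G} [H.Normal]
    (hH : Nat.card H = 4) (hK : Nat.card K = 3) {h k : G} (hh : h ∈ H) (hk : k ∈ K)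
    (hhk : ¬ Commute h k) : Nonempty (↥(H ⊔ K) ≃* alternatingGroup (Fin 4)) := by
  have hHK : Disjoint H K := Subgroup.disjoint_of_coprime_natCard (by rw [hH, hK]; decide)
  refine nonempty_mulEquiv_alternatingGroup_fin_four ?_ ?_
    (not_normal_subgroupOf_sup hHK hh hk hhk)
  · rw [natCard_sup_of_disjoint hHK, hH, hK]
  · rw [Nat.card_congr (Subgroup.subgroupOfEquivOfLe le_sup_right).toEquiv, hK]

end CosetAction

section IndexTwo

variable {G T : Type*} [Group G] [Group T] {N : Subgroup G}

theorem exists_mulEquiv_semidirectProduct_of_index_eq_two (hN : N.index = 2) {x : G}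
    (hx : x ∉ N) (hx2 : orderOf x = 2) (e : N ≃* T) :
    ∃ φ : Multiplicative (ZMod 2) →* MulAut T,
      Nonempty (G ≃* T ⋊[φ] Multiplicative (ZMod 2)) := by
  have := N.normal_of_index_eq_two hN
  have hcard : Nat.card (Subgroup.zpowers x) = 2 := by rw [Nat.card_zpowers, hx2]
  have hdisj : Disjoint N (Subgroup.zpowers x) :=
    (disjoint_zpowers_left_of_notMem (hx2 ▸ Nat.prime_two) hx).symm
  have hcompl : N.IsComplement' (Subgroup.zpowers x) := by
    refine Subgroup.isComplement'_of_disjoint_and_mul_eq_univ hdisj ?_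
    refine Set.eq_univ_of_forall fun g => Set.mem_mul.2 ?_
    by_cases hg : g ∈ N
    · exact ⟨g, hg, 1, one_mem _, mul_one g⟩
    · refine ⟨g * x⁻¹, ?_, x, Subgroup.mem_zpowers x, by group⟩
      simpa [Subgroup.mul_mem_iff_of_index_two hN, hg] using hx
  exact ⟨_, ⟨(SemidirectProduct.mulEquivSubgroup hcompl).symm.trans
    (SemidirectProduct.congr' e (mulEquivOfPrimeCardEq (p := 2) hcard (by simp)))⟩⟩

end IndexTwo

section Quaternion

open QuaternionGroup

variable {G : Type*} [Group G] {n : ℕ} {a x : G}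

/-- The universal property of the presentation `⟨a, x | a ^ 2n = 1, x ^ 2 = a ^ n, xa⁻¹ = ax⟩`
of the generalized quaternion group: the homomorphism with `a 1 ↦ a` and `xa 0 ↦ x`. -/
def quaternionGroupLift (ha : a ^ (2 * n) = 1) (hx : x ^ 2 = a ^ n) (hxa : SemiconjBy x a⁻¹ a) :
    QuaternionGroup n →* G :=
  let p : ZMod (2 * n) →+ Additive G := ZMod.lift (2 * n)
    ⟨zmultiplesHom (Additive G) (Additive.ofMul a), by
      rw [zmultiplesHom_apply, ← ofMul_zpow, zpow_natCast, ha, ofMul_one]⟩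
  have hp (k : ℤ) : (p k).toMul = a ^ k := by
    rw [ZMod.lift_coe, zmultiplesHom_apply, ← ofMul_zpow, toMul_ofMul]
  have hadd (i j : ZMod (2 * n)) : (p (i + j)).toMul = (p i).toMul * (p j).toMul := map_add p i j
  have hpn : (p n).toMul = x ^ 2 := by
    rw [← Int.cast_natCast, hp, zpow_natCast, hx]
  have hpx (i : ZMod (2 * n)) : (p i).toMul * x = x * (p (-i)).toMul := by
    obtain ⟨k, rfl⟩ := ZMod.intCast_surjective i
    rw [← Int.cast_neg, hp, hp, ← inv_zpow', (hxa.zpow_right k).eq]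
  .mk' (fun | .a i => (p i).toMul | .xa i => x * (p i).toMul) <| by
    rintro (i | i) (j | j)
    · exact hadd i j
    · calc x * (p (j - i)).toMul
        _ = x * (p (-i)).toMul * (p j).toMul := by rw [sub_eq_neg_add, hadd, mul_assoc]
        _ = (p i).toMul * (x * (p j).toMul) := by rw [← hpx, mul_assoc]
    · calc x * (p (i + j)).toMul
        _ = x * (p i).toMul * (p j).toMul := by rw [hadd, mul_assoc]
    · calc (p (n + j - i)).toMul
        _ = x * (x * (p (-i)).toMul) * (p j).toMul := by
          rw [add_sub_assoc, sub_eq_neg_add, hadd, hadd, hpn, sq, mul_assoc, mul_assoc, mul_assoc]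
        _ = x * (p i).toMul * (x * (p j).toMul) := by rw [← hpx, mul_assoc, mul_assoc, mul_assoc]

variable (ha : a ^ (2 * n) = 1) (hx : x ^ 2 = a ^ n) (hxa : SemiconjBy x a⁻¹ a)

theorem quaternionGroupLift_a (k : ℤ) :
    quaternionGroupLift ha hx hxa (.a k) = a ^ k := by
  change Additive.toMul (ZMod.lift (2 * n) _ (k : ZMod (2 * n))) = a ^ k
  rw [ZMod.lift_coe, zmultiplesHom_apply, ← ofMul_zpow, toMul_ofMul]

theorem quaternionGroupLift_xa (k : ℤ) :
    quaternionGroupLift ha hx hxa (.xa k) = x * a ^ k := by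
  rw [← quaternionGroupLift_a ha hx hxa]
  rfl

theorem quaternionGroupLift_range :
    (quaternionGroupLift ha hx hxa).range = Subgroup.closure {a, x} := by
  have ha_mem : a ∈ Subgroup.closure {a, x} := Subgroup.subset_closure (.inl rfl)
  have hx_mem : x ∈ Subgroup.closure {a, x} := Subgroup.subset_closure (.inr rfl)
  refine le_antisymm ?_ ((Subgroup.closure_le _).2 ?_)
  · rintro _ ⟨i | i, rfl⟩
    · obtain ⟨k, rfl⟩ := ZMod.intCast_surjective i
      exact quaternionGroupLift_a ha hx hxa k ▸ zpow_mem ha_mem k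
    · obtain ⟨k, rfl⟩ := ZMod.intCast_surjective i
      exact quaternionGroupLift_xa ha hx hxa k ▸ mul_mem hx_mem (zpow_mem ha_mem k)
  · rintro _ (rfl | rfl)
    · exact ⟨.a (1 : ℤ), by rw [quaternionGroupLift_a, zpow_one]⟩
    · exact ⟨.xa (0 : ℤ), by rw [quaternionGroupLift_xa, zpow_zero, mul_one]⟩

theorem quaternionGroupLift_injective (horder : orderOf a = 2 * n)
    (hxa' : x ∉ Subgroup.zpowers a) : Function.Injective (quaternionGroupLift ha hx hxa) := by
  rw [injective_iff_map_eq_one]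
  rintro (i | i) h
  · obtain ⟨k, rfl⟩ := ZMod.intCast_surjective i
    rw [quaternionGroupLift_a, ← orderOf_dvd_iff_zpow_eq_one, horder,
      ← ZMod.intCast_zmod_eq_zero_iff_dvd] at h
    rw [h, one_def]
  · obtain ⟨k, rfl⟩ := ZMod.intCast_surjective i
    rw [quaternionGroupLift_xa, mul_eq_one_iff_eq_inv] at h
    exact absurd (h ▸ inv_mem (Subgroup.zpow_mem_zpowers a k)) hxa'

theorem eq_of_orderOf_eq_two_quaternionGroup_three {x y : QuaternionGroup 3} (hx : orderOf x = 2)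
    (hy : orderOf y = 2) : x = y := by
  have h : ∀ x y : QuaternionGroup 3, x ^ 2 = 1 ∧ x ≠ 1 → y ^ 2 = 1 ∧ y ≠ 1 → x = y := by
    decide
  exact h x y (orderOf_eq_prime_iff.1 hx) (orderOf_eq_prime_iff.1 hy)

end Quaternion

section SmallOrders

variable {G : Type*} [Group G] {c i x : G}

theorem eq_one_or_eq_or_eq_inv_of_mem_zpowers (hc : orderOf c = 3) (hx : x ∈ Subgroup.zpowers c) :
    x = 1 ∨ x = c ∨ x = c⁻¹ := by
  have hc3 : c ^ 3 = 1 := hc ▸ pow_orderOf_eq_one c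
  classical
  have hfin : IsOfFinOrder c := orderOf_pos_iff.1 (hc ▸ three_pos)
  obtain ⟨k, hk, rfl⟩ := hfin.mem_zpowers_iff_mem_range_orderOf.1 hx |> Finset.mem_image.1
  rw [hc, Finset.mem_range] at hk
  interval_cases k
  · exact .inl (pow_zero c)
  · exact .inr (.inl (pow_one c))
  · exact .inr (.inr (eq_inv_of_mul_eq_one_left (by rw [← pow_succ, hc3])))

theorem eq_one_or_eq_of_mem_zpowers (hi : orderOf i = 2) (hx : x ∈ Subgroup.zpowers i) :
    x = 1 ∨ x = i := by
  classical
  have hfin : IsOfFinOrder i := orderOf_pos_iff.1 (hi ▸ two_pos)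
  obtain ⟨k, hk, rfl⟩ := hfin.mem_zpowers_iff_mem_range_orderOf.1 hx |> Finset.mem_image.1
  rw [hi, Finset.mem_range] at hk
  interval_cases k
  · exact .inl (pow_zero i)
  · exact .inr (pow_one i)

variable (hc : orderOf c = 3) (hi : orderOf i = 2) (hci : Commute c i)
include hc hi hci

theorem orderOf_mul_of_orderOf_three_two : orderOf (c * i) = 6 := by
  rw [hci.orderOf_mul_eq_mul_orderOf_of_coprime (by rw [hc, hi]; decide), hc, hi]

theorem mul_pow_four_of_orderOf_three_two : (c * i) ^ 4 = c := by
  have hc3 : c ^ 3 = 1 := hc ▸ pow_orderOf_eq_one c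
  have hi2 : i ^ 2 = 1 := hi ▸ pow_orderOf_eq_one i
  rw [hci.mul_pow, pow_succ c 3, hc3, pow_mul i 2 2, hi2, one_mul, one_pow, mul_one]

theorem mul_pow_three_of_orderOf_three_two : (c * i) ^ 3 = i := by
  have hc3 : c ^ 3 = 1 := hc ▸ pow_orderOf_eq_one c
  have hi2 : i ^ 2 = 1 := hi ▸ pow_orderOf_eq_one i
  rw [hci.mul_pow, hc3, pow_succ i 2, hi2, one_mul, one_mul]

end SmallOrders

section CommutingInvolutions

variable {G : Type*} [Group G] {c s t : G}

/-- The involutions of `G` which commute with `c`. If `c` has order 3, then `i ↦ ⟨c * i⟩` is a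
bijection from this set to the set of cyclic subgroups of order 6 containing `c`. -/
def commutingInvolutions (c : G) : Set G := {i | orderOf i = 2 ∧ Commute c i}

theorem eq_one_or_mem_commutingInvolutions {x : G} (hx : x ^ 2 = 1) (hcx : Commute c x) :
    x = 1 ∨ x ∈ commutingInvolutions c :=
  or_iff_not_imp_left.2 fun h => ⟨orderOf_eq_prime hx h, hcx⟩

theorem ne_one_of_mem_commutingInvolutions (hs : s ∈ commutingInvolutions c) : s ≠ 1 := by
  rintro rfl
  simp [commutingInvolutions] at hs

theorem mul_self_of_mem_commutingInvolutions (hs : s ∈ commutingInvolutions c) : s * s = 1 := by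
  rw [← sq, ← hs.1, pow_orderOf_eq_one]

theorem inv_eq_self_of_mem_commutingInvolutions (hs : s ∈ commutingInvolutions c) : s⁻¹ = s :=
  inv_eq_of_mul_eq_one_left (mul_self_of_mem_commutingInvolutions hs)

theorem conj_mem_commutingInvolutions {g : G} (hg : Commute c g)
    (hs : s ∈ commutingInvolutions c) : g * s * g⁻¹ ∈ commutingInvolutions c :=
  ⟨((MulAut.conj g).orderOf_eq s).trans hs.1, (hg.mul_right hs.2).mul_right hg.inv_right⟩

theorem injOn_zpowers_mul_commutingInvolutions (hc : orderOf c = 3) :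
    Set.InjOn (fun i => Subgroup.zpowers (c * i)) (commutingInvolutions c) := by
  intro i hi j hj hij
  dsimp only at hij
  obtain ⟨k, hk⟩ : c * j ∈ Subgroup.zpowers (c * i) := hij ▸ Subgroup.mem_zpowers (c * j)
  have hj_mem : j ∈ Subgroup.zpowers i := by
    refine ⟨k, ?_⟩
    dsimp only at hk ⊢
    rw [← mul_pow_three_of_orderOf_three_two hc hj.1 hj.2, ← hk, ← zpow_natCast, zpow_comm,
      zpow_natCast, mul_pow_three_of_orderOf_three_two hc hi.1 hi.2]
  refine ((eq_one_or_eq_of_mem_zpowers hi.1 hj_mem).resolve_left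
    (ne_one_of_mem_commutingInvolutions hj)).symm

theorem exists_zpowers_mul_eq {H : Subgroup G} [IsCyclic H] (hH : Nat.card H = 6)
    (hc : orderOf c = 3) (hcH : c ∈ H) :
    ∃ s ∈ commutingInvolutions c, Subgroup.zpowers (c * s) = H := by
  obtain ⟨h, rfl⟩ := (Subgroup.isCyclic_iff_exists_zpowers_eq_top H).1 inferInstance
  rw [Nat.card_zpowers] at hH
  have hs : h ^ 3 ∈ commutingInvolutions c := by
    refine ⟨by rw [orderOf_pow' h three_ne_zero, hH]; rfl, ?_⟩
    obtain ⟨k, rfl⟩ := hcH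
    exact ((Commute.refl h).zpow_left k).pow_right 3
  refine ⟨h ^ 3, hs, ?_⟩
  have := Nat.finite_of_card_ne_zero (α := Subgroup.zpowers h)
    (by rw [Nat.card_zpowers, hH]; decide)
  refine Subgroup.eq_of_le_of_card_ge
    (Subgroup.zpowers_le.2 (mul_mem hcH (Subgroup.npow_mem_zpowers h 3))) ?_
  rw [Nat.card_zpowers, Nat.card_zpowers, hH, orderOf_mul_of_orderOf_three_two hc hs.1 hs.2]

theorem mul_mem_commutingInvolutions (hs : s ∈ commutingInvolutions c)
    (ht : t ∈ commutingInvolutions c) (hst : s ≠ t) (h : Commute s t) :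
    s * t ∈ commutingInvolutions c := by
  refine (eq_one_or_mem_commutingInvolutions ?_ (hs.2.mul_right ht.2)).resolve_left fun h1 => ?_
  · rw [h.mul_pow, sq, sq, mul_self_of_mem_commutingInvolutions hs,
      mul_self_of_mem_commutingInvolutions ht, one_mul]
  · exact hst ((eq_inv_of_mul_eq_one_left h1).trans (inv_eq_self_of_mem_commutingInvolutions ht))

theorem exists_third_mem_commutingInvolutions (hs : s ∈ commutingInvolutions c)
    (ht : t ∈ commutingInvolutions c) (hst : s ≠ t) :
    ∃ r ∈ commutingInvolutions c, r ≠ s ∧ r ≠ t := by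
  by_cases h : Commute s t
  · exact ⟨s * t, mul_mem_commutingInvolutions hs ht hst h,
      fun h1 => ne_one_of_mem_commutingInvolutions ht (mul_eq_left.1 h1),
      fun h1 => ne_one_of_mem_commutingInvolutions hs (mul_eq_right.1 h1)⟩
  · refine ⟨s * t * s⁻¹, conj_mem_commutingInvolutions hs.2 ht, fun h1 => ?_, fun h1 => ?_⟩
    · exact hst (mul_left_cancel (mul_inv_eq_iff_eq_mul.1 h1)).symm
    · exact h (mul_inv_eq_iff_eq_mul.1 h1)

end CommutingInvolutions

section InvolutionSubgroup

variable {G : Type*} [Group G] {c : G}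

/-- If the involutions commuting with `c` also commute with each other, then together with `1` they
form a subgroup, the factor `Z_2 × Z_2` of the paper's `Z_6 × Z_2 = ⟨c⟩ × (Z_2 × Z_2)`. -/
def involutionSubgroup (hI : (commutingInvolutions c).Pairwise Commute) : Subgroup G where
  carrier := insert 1 (commutingInvolutions c)
  one_mem' := Set.mem_insert 1 _
  inv_mem' := by
    rintro x (rfl | hx)
    · exact .inl inv_one
    · exact .inr ((inv_eq_self_of_mem_commutingInvolutions hx).symm ▸ hx)
  mul_mem' := by
    rintro x y (rfl | hx) (rfl | hy)
    · exact .inl (one_mul 1)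
    · exact .inr ((one_mul y).symm ▸ hy)
    · exact .inr ((mul_one x).symm ▸ hx)
    · by_cases hxy : x = y
      · exact .inl (hxy ▸ mul_self_of_mem_commutingInvolutions hx)
      · exact .inr (mul_mem_commutingInvolutions hx hy hxy (hI hx hy hxy))

variable {hI : (commutingInvolutions c).Pairwise Commute}

theorem mem_involutionSubgroup {x : G} :
    x ∈ involutionSubgroup hI ↔ x = 1 ∨ x ∈ commutingInvolutions c :=
  Iff.rfl

theorem sq_eq_one_of_mem_involutionSubgroup {x : G} (hx : x ∈ involutionSubgroup hI) :
    x ^ 2 = 1 := by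
  obtain rfl | hx := hx
  · exact one_pow 2
  · rw [sq, mul_self_of_mem_commutingInvolutions hx]

theorem commute_of_mem_involutionSubgroup {x : G} (hx : x ∈ involutionSubgroup hI) :
    Commute c x := by
  obtain rfl | hx := hx
  · exact Commute.one_right c
  · exact hx.2

theorem zpowers_sup_involutionSubgroup_le_centralizer :
    Subgroup.zpowers c ⊔ involutionSubgroup hI ≤
      Subgroup.centralizer (insert c (commutingInvolutions c)) := by
  have hcomm {i j : G} (hi : i ∈ commutingInvolutions c) (hj : j ∈ commutingInvolutions c) :
      Commute i j := by
    by_cases hij : i = j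
    · exact hij ▸ Commute.refl i
    · exact hI hi hj hij
  rw [sup_le_iff, Subgroup.zpowers_le]
  constructor
  · rintro _ (rfl | hi)
    exacts [rfl, hi.2.symm.eq]
  · rintro x (rfl | hx)
    · exact one_mem _
    · rintro _ (rfl | hi)
      exacts [hx.2.eq, hcomm hi hx]

theorem pairwise_commute_of_centralizer_le
    (hCI : Subgroup.centralizer {c} ≤ Subgroup.centralizer (commutingInvolutions c)) :
    (commutingInvolutions c).Pairwise Commute :=
  fun _ hi _ hj _ => hCI (mem_centralizer_singleton_iff_commute.2 hj.2) _ hi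

end InvolutionSubgroup

/-- `c` generates the subgroup of order 3 shared by the three cyclic subgroups of order 6 of a
group whose element orders lie in `{1, 2, 3, 4, 6}`: these subgroups are the `⟨c * i⟩` for the three
involutions `i` commuting with `c`, so no other element of order 3 commutes with an involution. -/
structure IsSexticCore {G : Type*} [Group G] (c : G) : Prop where
  orderOf_mem (g : G) : orderOf g ∈ ({1, 2, 3, 4, 6} : Set ℕ)
  orderOf_eq : orderOf c = 3
  ncard_eq : (commutingInvolutions c).ncard = 3
  mem_zpowers {x i : G} (hx : orderOf x = 3) (hi : orderOf i = 2) (hxi : Commute x i) :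
    x ∈ Subgroup.zpowers c

section Existence

variable {G : Type*} [Group G] {c : G}

theorem mapsTo_zpowers_mul_commutingInvolutions (hc : orderOf c = 3) :
    Set.MapsTo (fun i => Subgroup.zpowers (c * i)) (commutingInvolutions c)
      {H : Subgroup G | IsCyclic H ∧ Nat.card H = 6} := by
  intro i hi
  refine ⟨inferInstanceAs (IsCyclic (Subgroup.zpowers (c * i))), ?_⟩
  rw [Nat.card_zpowers, orderOf_mul_of_orderOf_three_two hc hi.1 hi.2]

theorem image_zpowers_mul_commutingInvolutions
    (hthree : {H : Subgroup G | IsCyclic H ∧ Nat.card H = 6}.ncard = 3)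
    (hc : orderOf c = 3) (hI : 2 < (commutingInvolutions c).ncard) :
    (fun i => Subgroup.zpowers (c * i)) '' commutingInvolutions c =
      {H : Subgroup G | IsCyclic H ∧ Nat.card H = 6} := by
  refine Set.eq_of_subset_of_ncard_le (mapsTo_zpowers_mul_commutingInvolutions hc).image_subset ?_
    (Set.finite_of_ncard_ne_zero (hthree ▸ three_ne_zero))
  rwa [hthree, (injOn_zpowers_mul_commutingInvolutions hc).ncard_image]

theorem mem_zpowers_of_zpowers_mul_eq {x i j : G} (hc : orderOf c = 3)
    (hj : j ∈ commutingInvolutions c) (hx : orderOf x = 3) (hi : orderOf i = 2)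
    (hxi : Commute x i) (h : Subgroup.zpowers (c * j) = Subgroup.zpowers (x * i)) :
    x ∈ Subgroup.zpowers c := by
  obtain ⟨k, hk⟩ : x * i ∈ Subgroup.zpowers (c * j) := h ▸ Subgroup.mem_zpowers (x * i)
  refine ⟨k, ?_⟩
  dsimp only at hk ⊢
  rw [← mul_pow_four_of_orderOf_three_two hx hi hxi, ← hk, ← zpow_natCast, zpow_comm,
    zpow_natCast, mul_pow_four_of_orderOf_three_two hc hj.1 hj.2]

theorem isSexticCore_of_two_lt_ncard (horders : ∀ g : G, orderOf g ∈ ({1, 2, 3, 4, 6} : Set ℕ))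
    (hthree : {H : Subgroup G | IsCyclic H ∧ Nat.card H = 6}.ncard = 3)
    (hc : orderOf c = 3) (hI : 2 < (commutingInvolutions c).ncard) : IsSexticCore c := by
  have himage := image_zpowers_mul_commutingInvolutions hthree hc hI
  refine ⟨horders, hc, ?_, fun {x i} hx hi hxi => ?_⟩
  · rw [← (injOn_zpowers_mul_commutingInvolutions hc).ncard_image, himage, hthree]
  · have hmem := mapsTo_zpowers_mul_commutingInvolutions hx (x := i) ⟨hi, hxi⟩
    obtain ⟨j, hj, h⟩ := himage ▸ hmem
    exact mem_zpowers_of_zpowers_mul_eq hc hj hx hi hxi h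

theorem exists_isSexticCore (horders : ∀ g : G, orderOf g ∈ ({1, 2, 3, 4, 6} : Set ℕ))
    (hthree : {H : Subgroup G | IsCyclic H ∧ Nat.card H = 6}.ncard = 3)
    (hexists : ∃ H K : Subgroup G, IsCyclic H ∧ Nat.card H = 6 ∧ IsCyclic K ∧
      Nat.card K = 6 ∧ H ≠ K ∧ Nat.card (H ⊓ K : Subgroup G) = 3) :
    ∃ c : G, IsSexticCore c := by
  obtain ⟨H, K, _, hH, _, hK, hHK, hinf⟩ := hexists
  have := Nat.finite_of_card_ne_zero (hinf ▸ three_ne_zero)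
  obtain ⟨⟨c, hcHK⟩, hc⟩ :=
    exists_prime_orderOf_dvd_card' (G := (H ⊓ K : Subgroup G)) 3 (by rw [hinf])
  obtain ⟨hcH, hcK⟩ := Subgroup.mem_inf.1 hcHK
  rw [Subgroup.orderOf_mk] at hc
  obtain ⟨s, hs, rfl⟩ := exists_zpowers_mul_eq hH hc hcH
  obtain ⟨t, ht, rfl⟩ := exists_zpowers_mul_eq hK hc hcK
  have hst : s ≠ t := by rintro rfl; exact hHK rfl
  obtain ⟨r, hr, hrs, hrt⟩ := exists_third_mem_commutingInvolutions hs ht hst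
  have hfin : (commutingInvolutions c).Finite :=
    .of_injOn (mapsTo_zpowers_mul_commutingInvolutions hc)
      (injOn_zpowers_mul_commutingInvolutions hc)
      (Set.finite_of_ncard_ne_zero (hthree ▸ three_ne_zero))
  exact ⟨c, isSexticCore_of_two_lt_ncard horders hthree hc
    ((Set.two_lt_ncard hfin).2 ⟨s, hs, t, ht, r, hr, hst, hrs.symm, hrt.symm⟩)⟩

end Existence

namespace IsSexticCore

variable {G : Type*} [Group G] {c : G} (hc : IsSexticCore c)
include hc

theorem conj_mem_zpowers (g : G) : g * c * g⁻¹ ∈ Subgroup.zpowers c := by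
  obtain ⟨i, hi⟩ := Set.nonempty_of_ncard_ne_zero (hc.ncard_eq ▸ three_ne_zero)
  have hconj (x : G) : orderOf (g * x * g⁻¹) = orderOf x := (MulAut.conj g).orderOf_eq x
  exact hc.mem_zpowers ((hconj c).trans hc.orderOf_eq) ((hconj i).trans hi.1)
    (hi.2.map (MulAut.conj g))

theorem semiconjBy_self_or_inv (g : G) : Commute c g ∨ SemiconjBy g c c⁻¹ := by
  have hne : g * c * g⁻¹ ≠ 1 := by
    rw [Ne, conj_eq_one_iff, ← orderOf_eq_one_iff, hc.orderOf_eq]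
    decide
  obtain h | h | h := eq_one_or_eq_or_eq_inv_of_mem_zpowers hc.orderOf_eq (hc.conj_mem_zpowers g)
  · exact absurd h hne
  · exact .inl (mul_inv_eq_iff_eq_mul.1 h).symm
  · exact .inr (mul_inv_eq_iff_eq_mul.1 h)

theorem conj_mem (g : G) {i : G} (hi : i ∈ commutingInvolutions c) :
    g * i * g⁻¹ ∈ commutingInvolutions c := by
  obtain hg | hg := hc.semiconjBy_self_or_inv g
  · exact conj_mem_commutingInvolutions hg hi
  · refine ⟨((MulAut.conj g).orderOf_eq i).trans hi.1, ?_⟩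
    have h : Commute (g * c * g⁻¹) (g * i * g⁻¹) := hi.2.map (MulAut.conj g)
    rwa [hg.eq, mul_inv_cancel_right, Commute.inv_left_iff] at h

theorem commute_mul_of_not_commute {g h : G} (hg : ¬ Commute c g) (hh : ¬ Commute c h) :
    Commute c (g * h) := by
  have hg' := (hc.semiconjBy_self_or_inv g).resolve_left hg
  have hh' := (hc.semiconjBy_self_or_inv h).resolve_left hh
  exact ((inv_inv c ▸ hg'.inv_right).mul_left hh').symm

theorem commute_sq (g : G) : Commute c (g ^ 2) := by
  by_cases hg : Commute c g
  · exact hg.pow_right 2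
  · exact sq g ▸ hc.commute_mul_of_not_commute hg hg

theorem index_centralizer {g : G} (hg : ¬ Commute c g) :
    (Subgroup.centralizer {c}).index = 2 := by
  refine Subgroup.index_eq_two_iff_exists_notMem_and.2 ⟨g, ?_, fun h => ?_⟩
  · rwa [mem_centralizer_singleton_iff_commute]
  · simp only [mem_centralizer_singleton_iff_commute]
    exact or_iff_not_imp_right.2 fun hh => hc.commute_mul_of_not_commute hh hg

theorem pow_six_eq_one {g : G} (hg : Commute c g) : g ^ 6 = 1 := by
  rw [← orderOf_dvd_iff_pow_eq_one]
  have h12 : orderOf g = 4 → orderOf (c * g) = 12 := fun h4 => by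
    rw [hg.orderOf_mul_eq_mul_orderOf_of_coprime (by rw [hc.orderOf_eq, h4]; decide),
      hc.orderOf_eq, h4]
  have hcg := hc.orderOf_mem (c * g)
  obtain h | h | h | h | h := hc.orderOf_mem g
  case inr.inr.inr.inl => simp [h12 h] at hcg
  all_goals norm_num [show orderOf g = _ from h]

theorem pow_three_eq_one_or_mem {g : G} (hg : Commute c g) :
    g ^ 3 = 1 ∨ g ^ 3 ∈ commutingInvolutions c :=
  eq_one_or_mem_commutingInvolutions (by rw [← pow_mul, hc.pow_six_eq_one hg]) (hg.pow_right 3)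

theorem pow_four_mem_zpowers {g i : G} (hg : Commute c g) (hi : orderOf i = 2)
    (hgi : Commute g i) : g ^ 4 ∈ Subgroup.zpowers c := by
  by_cases h : g ^ 4 = 1
  · exact h ▸ one_mem _
  · refine hc.mem_zpowers (orderOf_eq_prime ?_ h) hi (hgi.pow_left 4)
    rw [← pow_mul, show 4 * 3 = 6 * 2 from rfl, pow_mul, hc.pow_six_eq_one hg, one_pow]

theorem pow_four_mul_pow_three {g : G} (hg : Commute c g) : g ^ 4 * g ^ 3 = g := by
  rw [← pow_add, show 4 + 3 = 6 + 1 from rfl, pow_succ, hc.pow_six_eq_one hg, one_mul]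

theorem commutingInvolutions_eq {r s t : G} (hr : r ∈ commutingInvolutions c)
    (hs : s ∈ commutingInvolutions c) (ht : t ∈ commutingInvolutions c) (hrs : r ≠ s)
    (hrt : r ≠ t) (hst : s ≠ t) : commutingInvolutions c = {r, s, t} := by
  refine (Set.eq_of_subset_of_ncard_le ?_ ?_
    (Set.finite_of_ncard_ne_zero (hc.ncard_eq ▸ three_ne_zero))).symm
  · rintro _ (rfl | rfl | rfl) <;> assumption
  · rw [hc.ncard_eq, Set.ncard_eq_three.2 ⟨r, s, t, hrs, hrt, hst, rfl⟩]

section NoncommutingInvolutions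

variable {s t : G}
  (hs : s ∈ commutingInvolutions c) (ht : t ∈ commutingInvolutions c) (hst : ¬ Commute s t)
include hs ht hst

theorem commutingInvolutions_eq_of_not_commute : commutingInvolutions c = {s, t, s * t * s} := by
  have hss := inv_eq_self_of_mem_commutingInvolutions hs
  refine hc.commutingInvolutions_eq hs ht ?_ ?_ ?_ ?_
  · nth_rw 2 [← hss]
    exact hc.conj_mem s ht
  · rintro rfl
    exact hst rfl
  · intro h
    rw [mul_assoc, left_eq_mul, mul_eq_one_iff_eq_inv, hss] at h
    exact hst (h ▸ rfl)
  · intro h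
    rw [← hss, eq_mul_inv_iff_mul_eq, hss] at h
    exact hst h.symm

theorem braid : t * s * t = s * t * s := by
  have htt := inv_eq_self_of_mem_commutingInvolutions ht
  have hmem : t * s * t⁻¹ ∈ commutingInvolutions c := hc.conj_mem t hs
  rw [hc.commutingInvolutions_eq_of_not_commute hs ht hst] at hmem
  obtain h | h | h := hmem
  · exact absurd (mul_inv_eq_iff_eq_mul.1 h).symm hst
  · rw [mul_inv_eq_iff_eq_mul, mul_right_inj] at h
    exact absurd (h ▸ rfl) hst
  · rwa [htt] at h

theorem orderOf_mul_eq_three : orderOf (s * t) = 3 := by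
  have hs2 := mul_self_of_mem_commutingInvolutions hs
  have ht2 := mul_self_of_mem_commutingInvolutions ht
  refine orderOf_eq_prime ?_ fun h => hst ?_
  · calc (s * t) ^ 3 = s * (t * s * t) * (s * t) := by
          simp only [pow_succ, pow_zero, one_mul, mul_assoc]
      _ = (s * s) * t * (s * s) * t := by rw [hc.braid hs ht hst]; simp only [mul_assoc]
      _ = 1 := by rw [hs2, one_mul, mul_one, ht2]
  · rw [eq_inv_of_mul_eq_one_left h]
    exact (Commute.refl t).inv_left

theorem mul_mem_zpowers_mul {i : G} (hi : i ∈ commutingInvolutions c) :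
    i * s ∈ Subgroup.zpowers (s * t) := by
  have hs2 := mul_self_of_mem_commutingInvolutions hs
  rw [hc.commutingInvolutions_eq_of_not_commute hs ht hst] at hi
  obtain rfl | rfl | rfl := hi
  · exact hs2 ▸ one_mem _
  · have h := inv_mem (Subgroup.mem_zpowers (s * i))
    rwa [mul_inv_rev, inv_eq_self_of_mem_commutingInvolutions hs,
      inv_eq_self_of_mem_commutingInvolutions ht] at h
  · rw [mul_assoc, hs2, mul_one]
    exact Subgroup.mem_zpowers (s * t)

theorem normal_zpowers_mul : (Subgroup.zpowers (s * t)).Normal := by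
  have hmul {i j : G} (hi : i ∈ commutingInvolutions c) (hj : j ∈ commutingInvolutions c) :
      i * j ∈ Subgroup.zpowers (s * t) := by
    have h := mul_mem (hc.mul_mem_zpowers_mul hs ht hst hi)
      (inv_mem (hc.mul_mem_zpowers_mul hs ht hst hj))
    rwa [mul_inv_rev, mul_assoc, mul_inv_cancel_left,
      inv_eq_self_of_mem_commutingInvolutions hj] at h
  refine ⟨fun n hn g => ?_⟩
  obtain ⟨k, rfl⟩ := hn
  dsimp only
  rw [← conj_zpow, ← conj_mul]
  exact zpow_mem (hmul (hc.conj_mem g hs) (hc.conj_mem g ht)) k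

theorem not_commute_of_mem {i : G} (hi : i ∈ commutingInvolutions c) (his : Commute i s) :
    ¬ Commute i (s * t) := by
  rw [hc.commutingInvolutions_eq_of_not_commute hs ht hst] at hi
  obtain rfl | rfl | rfl := hi
  · rwa [commute_self_mul_iff]
  · exact absurd his.symm hst
  · have h : s * t * s = s * (s * t) := mul_right_cancel (his.eq.trans (mul_assoc s (s * t) s).symm)
    exact absurd (mul_left_cancel ((mul_assoc s t s).symm.trans h)).symm hst

theorem mem_zpowers_of_commute_of_commute {g : G} (hgs : Commute g s) (hgt : Commute g (s * t)) :
    g ∈ Subgroup.zpowers c := by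
  have of_commute {x : G} (hx : Commute c x) (hxs : Commute x s) (hxt : Commute x (s * t)) :
      x ∈ Subgroup.zpowers c := by
    have hx3 : x ^ 3 = 1 := (hc.pow_three_eq_one_or_mem hx).resolve_right fun h =>
      hc.not_commute_of_mem hs ht hst h (hxs.pow_left 3) (hxt.pow_left 3)
    rw [← hc.pow_four_mul_pow_three hx, hx3, mul_one]
    exact hc.pow_four_mem_zpowers hx hs.1 hxs
  by_cases hcg : Commute c g
  · exact of_commute hcg hgs hgt
  have hg_sq : g ^ 2 = 1 := by
    obtain h | h | h := eq_one_or_eq_or_eq_inv_of_mem_zpowers hc.orderOf_eq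
      (of_commute (hc.commute_sq g) (hgs.pow_left 2) (hgt.pow_left 2))
    · exact h
    · exact absurd (h ▸ Commute.pow_self g 2) hcg
    · exact absurd (Commute.inv_left_iff.1 (h ▸ Commute.pow_self g 2)) hcg
  have hg : orderOf g = 2 := orderOf_eq_prime hg_sq (by rintro rfl; exact hcg (Commute.one_right c))
  exact absurd (commute_of_mem_zpowers
    (hc.mem_zpowers (hc.orderOf_mul_eq_three hs ht hst) hg hgt.symm) hs.2).symm
    (commute_self_mul_iff.not.2 hst)

theorem exists_mem_zpowers_mul_commute (g : G) :
    ∃ n ∈ Subgroup.zpowers (s * t), Commute (n * g) s := by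
  have hs2 := mul_self_of_mem_commutingInvolutions hs
  have ht2 := mul_self_of_mem_commutingInvolutions ht
  -- If `gsg⁻¹ = ns` with `n ∈ ⟨st⟩`, then `n(gsg⁻¹)n⁻¹ = n³s = s`.
  set n := g * s * g⁻¹ * s with hn_def
  have hn : n ∈ Subgroup.zpowers (s * t) := hc.mul_mem_zpowers_mul hs ht hst (hc.conj_mem g hs)
  have hn_mul : n * n = n⁻¹ := by
    rw [eq_inv_iff_mul_eq_one, ← pow_two, ← pow_succ, ← orderOf_dvd_iff_pow_eq_one,
      two_add_one_eq_three, ← hc.orderOf_mul_eq_three hs ht hst]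
    exact orderOf_dvd_of_mem_zpowers hn
  refine ⟨n, hn, ?_⟩
  calc n * g * s = n * (n * (s * g)) := by
        rw [hn_def, mul_assoc _ s (s * g), ← mul_assoc s s g, hs2]; group
    _ = n⁻¹ * s * g := by rw [← mul_assoc, hn_mul, mul_assoc]
    _ = s * (n * g) := by
      rw [← (semiconjBy_inv_of_mem_zpowers_mul hs2 ht2 hn).eq, mul_assoc]

theorem exists_mem_sup_commute (g : G) :
    ∃ h ∈ Subgroup.zpowers (s * t) ⊔ Subgroup.zpowers s,
      Commute (h * g) s ∧ Commute (h * g) (s * t) := by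
  have hnormal := hc.normal_zpowers_mul hs ht hst
  have hr := hc.orderOf_mul_eq_three hs ht hst
  obtain ⟨n, hn, hns⟩ := hc.exists_mem_zpowers_mul_commute hs ht hst g
  have hnS : n ∈ Subgroup.zpowers (s * t) ⊔ Subgroup.zpowers s := le_sup_left (α := Subgroup G) hn
  obtain h | h | h := eq_one_or_eq_or_eq_inv_of_mem_zpowers hr
    (hnormal.conj_mem _ (Subgroup.mem_zpowers (s * t)) (n * g))
  · rw [conj_eq_one_iff, ← orderOf_eq_one_iff, hr] at h
    exact absurd h (by decide)
  · exact ⟨n, hnS, hns, mul_inv_eq_iff_eq_mul.1 h⟩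
  · have hsr : SemiconjBy s (s * t)⁻¹ (s * t) := by
      simpa only [inv_inv] using
        semiconjBy_inv_of_mem_zpowers_mul (mul_self_of_mem_commutingInvolutions hs)
          (mul_self_of_mem_commutingInvolutions ht) (inv_mem (Subgroup.mem_zpowers (s * t)))
    have hsS : s ∈ Subgroup.zpowers (s * t) ⊔ Subgroup.zpowers s :=
      le_sup_right (α := Subgroup G) (Subgroup.mem_zpowers s)
    refine ⟨s * n, mul_mem hsS hnS, ?_⟩
    rw [mul_assoc]
    exact ⟨(Commute.refl s).mul_left hns, hsr.mul_left (mul_inv_eq_iff_eq_mul.1 h)⟩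

theorem nonempty_mulEquiv_zmod_three_prod_perm :
    Nonempty (G ≃* Multiplicative (ZMod 3) × Equiv.Perm (Fin 3)) := by
  have := hc.normal_zpowers_mul hs ht hst
  set S := Subgroup.zpowers (s * t) ⊔ Subgroup.zpowers s
  obtain ⟨e⟩ : Nonempty (S ≃* Equiv.Perm (Fin 3)) :=
    nonempty_sup_mulEquiv_perm_fin_three
      (by rw [Nat.card_zpowers, hc.orderOf_mul_eq_three hs ht hst])
      (by rw [Nat.card_zpowers, hs.1]) (Subgroup.mem_zpowers (s * t)) (Subgroup.mem_zpowers s)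
      (fun h => hst (commute_self_mul_iff.1 h.symm))
  have hcS : S ≤ Subgroup.centralizer {c} := by
    simp only [S, sup_le_iff, Subgroup.zpowers_le, mem_centralizer_singleton_iff_commute]
    exact ⟨hs.2.mul_right ht.2, hs.2⟩
  have hcomm : ∀ x ∈ Subgroup.zpowers c, ∀ y ∈ S, Commute x y := fun x hx y hy =>
    commute_of_mem_zpowers hx (mem_centralizer_singleton_iff_commute.1 (hcS hy))
  have htop : Subgroup.zpowers c ⊔ S = ⊤ := by
    refine eq_top_iff.2 fun g _ => ?_
    obtain ⟨h, hh, hhs, hht⟩ := hc.exists_mem_sup_commute hs ht hst g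
    rw [← inv_mul_cancel_left h g]
    exact mul_mem (inv_mem (le_sup_right (α := Subgroup G) hh))
      (le_sup_left (α := Subgroup G) (hc.mem_zpowers_of_commute_of_commute hs ht hst hhs hht))
  have hdisj := disjoint_of_forall_commute_of_center_eq_bot hcomm
    (center_eq_bot_of_mulEquiv e center_perm_fin_three)
  exact ⟨Subgroup.topEquiv.symm.trans <| (MulEquiv.subgroupCongr htop.symm).trans <|
    (supMulEquivProd hcomm hdisj).trans <| (mulEquivOfPrimeCardEq (p := 3)
      (by rw [Nat.card_zpowers, hc.orderOf_eq]) (by simp)).prodCongr e⟩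

end NoncommutingInvolutions

theorem natCard_involutionSubgroup (hI : (commutingInvolutions c).Pairwise Commute) :
    Nat.card (involutionSubgroup hI) = 4 := by
  have h : (insert 1 (commutingInvolutions c)).ncard = 4 := by
    rw [Set.ncard_insert_of_notMem (fun h => ne_one_of_mem_commutingInvolutions h rfl)
      (Set.finite_of_ncard_ne_zero (hc.ncard_eq ▸ three_ne_zero)), hc.ncard_eq]
  exact h

theorem normal_involutionSubgroup (hI : (commutingInvolutions c).Pairwise Commute) :
    (involutionSubgroup hI).Normal := by
  refine ⟨?_⟩
  rintro x (rfl | hx) g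
  · exact .inl (by group)
  · exact .inr (hc.conj_mem g hx)

theorem mem_zpowers_sup_involutionSubgroup (hI : (commutingInvolutions c).Pairwise Commute)
    {g i : G} (hg : Commute c g) (hi : i ∈ commutingInvolutions c) (hgi : Commute g i) :
    g ∈ Subgroup.zpowers c ⊔ involutionSubgroup hI := by
  rw [← hc.pow_four_mul_pow_three hg]
  exact Subgroup.mul_mem_sup (hc.pow_four_mem_zpowers hg hi.1 hgi) (hc.pow_three_eq_one_or_mem hg)

section Abelian

variable (hCI : Subgroup.centralizer {c} ≤ Subgroup.centralizer (commutingInvolutions c))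

include hCI

theorem centralizer_eq_zpowers_sup_involutionSubgroup
    (hI : (commutingInvolutions c).Pairwise Commute) :
    Subgroup.centralizer {c} = Subgroup.zpowers c ⊔ involutionSubgroup hI := by
  refine le_antisymm (fun g hg => ?_) (zpowers_sup_involutionSubgroup_le_centralizer.trans
    (Subgroup.centralizer_le (Set.singleton_subset_iff.2 (Set.mem_insert c _))))
  obtain ⟨i, hi⟩ := Set.nonempty_of_ncard_ne_zero (hc.ncard_eq ▸ three_ne_zero)
  exact hc.mem_zpowers_sup_involutionSubgroup hI (mem_centralizer_singleton_iff_commute.1 hg) hi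
    (hCI hg i hi).symm

theorem nonempty_centralizer_mulEquiv_zmod_six_prod_zmod_two :
    Nonempty (Subgroup.centralizer {c} ≃* Multiplicative (ZMod 6) × Multiplicative (ZMod 2)) := by
  have hI := pairwise_commute_of_centralizer_le hCI
  rw [hc.centralizer_eq_zpowers_sup_involutionSubgroup hCI hI]
  exact nonempty_mulEquiv_zmod_six_prod_zmod_two
    (fun x hx y hy => commute_of_mem_zpowers hx (commute_of_mem_involutionSubgroup hy))
    (by rw [Nat.card_zpowers, hc.orderOf_eq]) (hc.natCard_involutionSubgroup hI)
    fun _ => sq_eq_one_of_mem_involutionSubgroup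

end Abelian

section NonAbelian

variable (hI : (commutingInvolutions c).Pairwise Commute) {q s : G} (hq : Commute c q)
  (hs : s ∈ commutingInvolutions c) (hqs : ¬ Commute q s)
include hI hq hs hqs

theorem orderOf_eq_three_of_not_commute : orderOf q = 3 := by
  refine orderOf_eq_prime ((hc.pow_three_eq_one_or_mem hq).resolve_right fun h => hqs ?_) ?_
  · exact (zpowers_sup_involutionSubgroup_le_centralizer (hc.mem_zpowers_sup_involutionSubgroup hI
      hq h (Commute.self_pow q 3)) s (.inr hs)).symm
  · rintro rfl
    exact hqs (Commute.one_left s)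

theorem exists_mem_zpowers_conj_eq {i : G} (hi : i ∈ commutingInvolutions c) :
    ∃ n ∈ Subgroup.zpowers q, n * s * n⁻¹ = i := by
  have hq3 : q ^ 3 = 1 := hc.orderOf_eq_three_of_not_commute hI hq hs hqs ▸ pow_orderOf_eq_one q
  have hne : q * s * q⁻¹ ≠ s := fun h => hqs (mul_inv_eq_iff_eq_mul.1 h)
  have hne_sq : q ^ 2 * s * (q ^ 2)⁻¹ ≠ s := fun h => hqs <| by
    have h4 : Commute ((q ^ 2) ^ 2) s := Commute.pow_left (mul_inv_eq_iff_eq_mul.1 h) 2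
    rwa [← pow_mul, pow_succ, hq3, one_mul] at h4
  have hne_conj : q ^ 2 * s * (q ^ 2)⁻¹ ≠ q * s * q⁻¹ := by
    have h : q ^ 2 * s * (q ^ 2)⁻¹ = q * (q * s * q⁻¹) * q⁻¹ := by
      rw [sq, mul_inv_rev]
      simp only [mul_assoc]
    rw [h]
    exact (MulAut.conj q).injective.ne hne
  rw [hc.commutingInvolutions_eq (hc.conj_mem (q ^ 2) hs) (hc.conj_mem q hs) hs hne_conj hne_sq
    hne] at hi
  obtain rfl | rfl | rfl := hi
  · exact ⟨q ^ 2, Subgroup.npow_mem_zpowers q 2, rfl⟩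
  · exact ⟨q, Subgroup.mem_zpowers q, rfl⟩
  · exact ⟨1, one_mem _, by rw [one_mul, inv_one, mul_one]⟩

theorem centralizer_eq_zpowers_sup_sup :
    Subgroup.centralizer {c} =
      Subgroup.zpowers c ⊔ (involutionSubgroup hI ⊔ Subgroup.zpowers q) := by
  refine le_antisymm (fun g hg => ?_) ?_
  · rw [mem_centralizer_singleton_iff_commute] at hg
    obtain ⟨n, hn, hns⟩ := hc.exists_mem_zpowers_conj_eq hI hq hs hqs (hc.conj_mem g hs)
    have hcn : Commute c n := (commute_of_mem_zpowers hn hq.symm).symm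
    have hns' : Commute (n⁻¹ * g) s :=
      (hns ▸ (SemiconjBy.conj_mk n s).inv_symm_left).mul_left (SemiconjBy.conj_mk g s)
    rw [← sup_assoc, ← mul_inv_cancel_left n g]
    refine mul_mem (le_sup_right (α := Subgroup G) hn) (le_sup_left (α := Subgroup G) ?_)
    exact hc.mem_zpowers_sup_involutionSubgroup hI (hcn.inv_right.mul_right hg) hs hns'
  · rw [sup_le_iff, sup_le_iff, Subgroup.zpowers_le, Subgroup.zpowers_le]
    simp only [mem_centralizer_singleton_iff_commute]
    exact ⟨Commute.refl c, fun x hx => mem_centralizer_singleton_iff_commute.2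
      (commute_of_mem_involutionSubgroup hx), hq⟩

theorem nonempty_centralizer_mulEquiv_zmod_three_prod_alternatingGroup :
    Nonempty (Subgroup.centralizer {c} ≃*
      Multiplicative (ZMod 3) × alternatingGroup (Fin 4)) := by
  have := hc.normal_involutionSubgroup hI
  have hq3 := hc.orderOf_eq_three_of_not_commute hI hq hs hqs
  obtain ⟨e⟩ : Nonempty
      (↥(involutionSubgroup hI ⊔ Subgroup.zpowers q) ≃* alternatingGroup (Fin 4)) :=
    nonempty_sup_mulEquiv_alternatingGroup_fin_four (hc.natCard_involutionSubgroup hI)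
      (by rw [Nat.card_zpowers, hq3]) (mem_involutionSubgroup.2 (.inr hs)) (Subgroup.mem_zpowers q)
      (fun h => hqs h.symm)
  have hcentralizer := hc.centralizer_eq_zpowers_sup_sup hI hq hs hqs
  have hcomm : ∀ x ∈ Subgroup.zpowers c, ∀ y ∈ involutionSubgroup hI ⊔ Subgroup.zpowers q,
      Commute x y := fun x hx y hy => commute_of_mem_zpowers hx <|
    mem_centralizer_singleton_iff_commute.1 (hcentralizer ▸ le_sup_right (α := Subgroup G) hy)
  have hdisj := disjoint_of_forall_commute_of_center_eq_bot hcomm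
    (center_eq_bot_of_mulEquiv e (alternatingGroup.center_eq_bot (by simp)))
  exact ⟨(MulEquiv.subgroupCongr hcentralizer).trans <| (supMulEquivProd hcomm hdisj).trans <|
    (mulEquivOfPrimeCardEq (p := 3) (by rw [Nat.card_zpowers, hc.orderOf_eq]) (by simp)).prodCongr
      e⟩

end NonAbelian

section NoOuterInvolution

variable (hinv : ∀ x : G, orderOf x = 2 → Commute c x) {g : G} (hg : ¬ Commute c g)
include hinv hg

theorem orderOf_eq_four : orderOf g = 4 := by
  have hdvd : orderOf g = 4 ∨ orderOf g ∣ 6 := by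
    obtain h | h | h | h | h := hc.orderOf_mem g
    all_goals norm_num [show orderOf g = _ from h]
  refine hdvd.resolve_right fun h => hg ?_
  have hg3 : Commute c (g ^ 3) := by
    by_cases h1 : g ^ 3 = 1
    · exact h1 ▸ Commute.one_right c
    · exact hinv _ (orderOf_eq_prime (by rw [← pow_mul, orderOf_dvd_iff_pow_eq_one.1 h]) h1)
  have h := hg3.mul_right (hc.commute_sq g).inv_right
  rwa [pow_succ', mul_inv_cancel_right] at h

theorem sq_mem_commutingInvolutions : g ^ 2 ∈ commutingInvolutions c := by
  refine ⟨?_, hc.commute_sq g⟩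
  rw [orderOf_pow' g two_ne_zero, hc.orderOf_eq_four hinv hg]
  rfl

theorem commute_of_mem_commutingInvolutions (hI : (commutingInvolutions c).Pairwise Commute)
    {v : G} (hv : v ∈ commutingInvolutions c) : Commute g v := by
  by_contra hgv
  have hz := hc.sq_mem_commutingInvolutions hinv hg
  set w := g * v * g⁻¹ with hw_def
  have hw : w ∈ commutingInvolutions c := hc.conj_mem g hv
  have hwv : w ≠ v := fun h => hgv (mul_inv_eq_iff_eq_mul.1 h)
  have hzv : g ^ 2 ≠ v := by
    rintro rfl
    exact hgv (Commute.self_pow g 2)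
  have hzw : g ^ 2 ≠ w := by
    intro h
    rw [hw_def, sq, eq_mul_inv_iff_mul_eq, mul_assoc, mul_right_inj, ← sq] at h
    exact hzv h
  have hwvz : w * v = g ^ 2 := by
    have hmem := mul_mem_commutingInvolutions hw hv hwv (hI hw hv hwv)
    rw [hc.commutingInvolutions_eq hz hw hv hzw hzv hwv] at hmem
    obtain h | h | h := hmem
    · exact h
    · exact absurd (mul_eq_left.1 h) (ne_one_of_mem_commutingInvolutions hv)
    · exact absurd (mul_eq_right.1 h) (ne_one_of_mem_commutingInvolutions hw)
  have hgv_order : orderOf (g * v) = 4 :=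
    hc.orderOf_eq_four hinv fun h => hg <| by
      simpa only [mul_inv_cancel_right] using h.mul_right hv.2.inv_right
  have hgv_sq : (g * v) ^ 2 = 1 := by
    calc (g * v) ^ 2 = w * g ^ 2 * v := by
          rw [hw_def, sq, sq, ← mul_assoc _ g g, inv_mul_cancel_right, ← mul_assoc]
      _ = w * v * g ^ 2 := by rw [mul_assoc, (hI hz hv hzv).eq, ← mul_assoc]
      _ = 1 := by rw [hwvz, mul_self_of_mem_commutingInvolutions hz]
  have := orderOf_dvd_of_pow_eq_one hgv_sq
  rw [hgv_order] at this
  exact absurd this (by decide)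

theorem nonempty_closure_mulEquiv_quaternionGroup :
    Nonempty (Subgroup.closure {c * g ^ 2, g} ≃* QuaternionGroup 3) := by
  have hz := hc.sq_mem_commutingInvolutions hinv hg
  have horder : orderOf (c * g ^ 2) = 2 * 3 :=
    orderOf_mul_of_orderOf_three_two hc.orderOf_eq hz.1 hz.2
  have hsq : g ^ 2 = (c * g ^ 2) ^ 3 :=
    (mul_pow_three_of_orderOf_three_two hc.orderOf_eq hz.1 hz.2).symm
  have hconj : SemiconjBy g (c * g ^ 2) (c * g ^ 2)⁻¹ := by
    rw [mul_inv_rev, inv_eq_self_of_mem_commutingInvolutions hz, ← hz.2.inv_left.eq]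
    exact ((hc.semiconjBy_self_or_inv g).resolve_left hg).mul_right (Commute.self_pow g 2)
  have hnotMem : g ∉ Subgroup.zpowers (c * g ^ 2) := fun h =>
    hg (commute_of_mem_zpowers h ((Commute.refl c).mul_left hz.2.symm)).symm
  have hinv_conj : SemiconjBy g (c * g ^ 2)⁻¹ (c * g ^ 2) := by
    simpa only [inv_inv] using hconj.inv_right
  rw [← quaternionGroupLift_range (horder ▸ pow_orderOf_eq_one _) hsq hinv_conj]
  exact ⟨(MonoidHom.ofInjective (quaternionGroupLift_injective _ _ _ horder hnotMem)).symm⟩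

theorem eq_sq_of_mem_closure {w : G} (hw : orderOf w = 2)
    (hw_mem : w ∈ Subgroup.closure {c * g ^ 2, g}) : w = g ^ 2 := by
  obtain ⟨e⟩ := hc.nonempty_closure_mulEquiv_quaternionGroup hinv hg
  have hz_mem : g ^ 2 ∈ Subgroup.closure {c * g ^ 2, g} :=
    pow_mem (Subgroup.subset_closure (.inr rfl)) 2
  have h : e ⟨w, hw_mem⟩ = e ⟨g ^ 2, hz_mem⟩ := by
    apply eq_of_orderOf_eq_two_quaternionGroup_three
    · rw [e.orderOf_eq, Subgroup.orderOf_mk, hw]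
    · rw [e.orderOf_eq, Subgroup.orderOf_mk, (hc.sq_mem_commutingInvolutions hinv hg).1]
  exact congrArg Subtype.val (e.injective h)

theorem mem_zpowers_sup_closure (hI : (commutingInvolutions c).Pairwise Commute) {w i : G}
    (hw : w ∈ commutingInvolutions c) (hwz : w ≠ g ^ 2) (hi : i ∈ commutingInvolutions c) :
    i ∈ Subgroup.zpowers w ⊔ Subgroup.closure {c * g ^ 2, g} := by
  have hz := hc.sq_mem_commutingInvolutions hinv hg
  have hz_mem : g ^ 2 ∈ Subgroup.closure {c * g ^ 2, g} :=
    pow_mem (Subgroup.subset_closure (.inr rfl)) 2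
  have hmul := mul_mem_commutingInvolutions hw hz hwz (hI hw hz hwz)
  rw [hc.commutingInvolutions_eq hmul hw hz
    (fun h => ne_one_of_mem_commutingInvolutions hz (mul_eq_left.1 h))
    (fun h => ne_one_of_mem_commutingInvolutions hw (mul_eq_right.1 h)) hwz] at hi
  obtain rfl | rfl | rfl := hi
  · exact Subgroup.mul_mem_sup (Subgroup.mem_zpowers w) hz_mem
  · exact le_sup_left (α := Subgroup G) (Subgroup.mem_zpowers i)
  · exact le_sup_right (α := Subgroup G) hz_mem

theorem centralizer_le_centralizer_commutingInvolutions
    (hI : (commutingInvolutions c).Pairwise Commute) :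
    Subgroup.centralizer {c} ≤ Subgroup.centralizer (commutingInvolutions c) := by
  intro q hq i hi
  have hqg : ¬ Commute c (q * g) := fun h => hg <| by
    simpa only [inv_mul_cancel_left] using
      (mem_centralizer_singleton_iff_commute.1 hq).inv_right.mul_right h
  have h := (hc.commute_of_mem_commutingInvolutions hinv hqg hI hi).mul_left
    (hc.commute_of_mem_commutingInvolutions hinv hg hI hi).inv_left
  rw [mul_inv_cancel_right] at h
  exact h.symm.eq

theorem zpowers_sup_closure_eq_top (hI : (commutingInvolutions c).Pairwise Commute) {w : G}
    (hw : w ∈ commutingInvolutions c) (hwz : w ≠ g ^ 2) :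
    Subgroup.zpowers w ⊔ Subgroup.closure {c * g ^ 2, g} = ⊤ := by
  have hg_mem : g ∈ Subgroup.zpowers w ⊔ Subgroup.closure {c * g ^ 2, g} :=
    le_sup_right (α := Subgroup G) (Subgroup.subset_closure (.inr rfl))
  have hc_mem : c ∈ Subgroup.zpowers w ⊔ Subgroup.closure {c * g ^ 2, g} := by
    have h : c * g ^ 2 ∈ Subgroup.zpowers w ⊔ Subgroup.closure {c * g ^ 2, g} :=
      le_sup_right (α := Subgroup G) (Subgroup.subset_closure (.inl rfl))
    simpa only [mul_inv_cancel_right] using mul_mem h (inv_mem (pow_mem hg_mem 2))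
  have hcentralizer :
      Subgroup.centralizer {c} ≤ Subgroup.zpowers w ⊔ Subgroup.closure {c * g ^ 2, g} := by
    rw [hc.centralizer_eq_zpowers_sup_involutionSubgroup
      (hc.centralizer_le_centralizer_commutingInvolutions hinv hg hI) hI, sup_le_iff,
      Subgroup.zpowers_le]
    refine ⟨hc_mem, ?_⟩
    rintro x (rfl | hx)
    · exact one_mem _
    · exact hc.mem_zpowers_sup_closure hinv hg hI hw hwz hx
  refine eq_top_iff.2 fun x _ => ?_
  by_cases hx : Commute c x
  · exact hcentralizer (mem_centralizer_singleton_iff_commute.2 hx)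
  · rw [← mul_mem_cancel_right hg_mem]
    exact hcentralizer <| mem_centralizer_singleton_iff_commute.2 <|
      hc.commute_mul_of_not_commute hx hg

theorem nonempty_mulEquiv_zmod_two_prod_quaternionGroup
    (hI : (commutingInvolutions c).Pairwise Commute) :
    Nonempty (G ≃* Multiplicative (ZMod 2) × QuaternionGroup 3) := by
  obtain ⟨w, hw, hwz⟩ := Set.exists_ne_of_one_lt_ncard
    (by rw [hc.ncard_eq]; decide : 1 < (commutingInvolutions c).ncard) (g ^ 2)
  have hz := hc.sq_mem_commutingInvolutions hinv hg
  obtain ⟨e⟩ := hc.nonempty_closure_mulEquiv_quaternionGroup hinv hg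
  have hle : Subgroup.closure {c * g ^ 2, g} ≤ Subgroup.centralizer {w} := by
    rw [Subgroup.closure_le]
    rintro _ (rfl | rfl)
    · exact mem_centralizer_singleton_iff_commute.2 (hw.2.symm.mul_right (hI hw hz hwz))
    · exact mem_centralizer_singleton_iff_commute.2
        (hc.commute_of_mem_commutingInvolutions hinv hg hI hw).symm
  have hcomm : ∀ x ∈ Subgroup.zpowers w, ∀ y ∈ Subgroup.closure {c * g ^ 2, g}, Commute x y :=
    fun x hx y hy =>
      commute_of_mem_zpowers hx (mem_centralizer_singleton_iff_commute.1 (hle hy))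
  have hdisj : Disjoint (Subgroup.zpowers w) (Subgroup.closure {c * g ^ 2, g}) :=
    disjoint_zpowers_left_of_notMem (hw.1 ▸ Nat.prime_two) fun h =>
      hwz (hc.eq_sq_of_mem_closure hinv hg hw.1 h)
  have htop := hc.zpowers_sup_closure_eq_top hinv hg hI hw hwz
  exact ⟨Subgroup.topEquiv.symm.trans <| (MulEquiv.subgroupCongr htop.symm).trans <|
    (supMulEquivProd hcomm hdisj).trans <|
    (mulEquivOfPrimeCardEq (p := 2) (by rw [Nat.card_zpowers, hw.1]) (by simp)).prodCongr e⟩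

end NoOuterInvolution

theorem nonempty_mulEquiv_or_exists_semidirectProduct {T : Type*} [Group T]
    (e : Subgroup.centralizer {c} ≃* T)
    (h : (∃ x : G, orderOf x = 2 ∧ ¬ Commute c x) ∨ ∀ g : G, Commute c g) :
    Nonempty (G ≃* T) ∨
      ∃ φ : Multiplicative (ZMod 2) →* MulAut T,
        Nonempty (G ≃* T ⋊[φ] Multiplicative (ZMod 2)) := by
  obtain ⟨x, hx2, hx⟩ | h := h
  · exact .inr (exists_mulEquiv_semidirectProduct_of_index_eq_two (hc.index_centralizer hx)
      (mem_centralizer_singleton_iff_commute.not.2 hx) hx2 e)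
  · have htop : Subgroup.centralizer {c} = ⊤ :=
      eq_top_iff.2 fun g _ => mem_centralizer_singleton_iff_commute.2 (h g)
    exact .inl ⟨Subgroup.topEquiv.symm.trans ((MulEquiv.subgroupCongr htop.symm).trans e)⟩

end IsSexticCore

theorem classification_of_groups_with_three_cyclic_subgroups_of_order_six_general
    (G : Type*) [Group G]
    (horders : ∀ g : G, orderOf g ∈ ({1, 2, 3, 4, 6} : Set ℕ))
    (hthree : {H : Subgroup G | IsCyclic H ∧ Nat.card H = 6}.ncard = 3)
    (hexists : ∃ H K : Subgroup G, IsCyclic H ∧ Nat.card H = 6 ∧ IsCyclic K ∧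
      Nat.card K = 6 ∧ H ≠ K ∧ Nat.card (H ⊓ K : Subgroup G) = 3) :
    Nonempty (G ≃* Multiplicative (ZMod 2) × Multiplicative (ZMod 6)) ∨
    Nonempty (G ≃* Multiplicative (ZMod 3) × Equiv.Perm (Fin 3)) ∨
    Nonempty (G ≃* Multiplicative (ZMod 2) × QuaternionGroup 3) ∨
    (∃ φ : Multiplicative (ZMod 2) →*
        MulAut (Multiplicative (ZMod 6) × Multiplicative (ZMod 2)),
      Nonempty (G ≃* (Multiplicative (ZMod 6) × Multiplicative (ZMod 2)) ⋊[φ]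
        Multiplicative (ZMod 2))) ∨
    Nonempty (G ≃* Multiplicative (ZMod 2) × Multiplicative (ZMod 2) × Equiv.Perm (Fin 3)) ∨
    Nonempty (G ≃* Multiplicative (ZMod 3) × alternatingGroup (Fin 4)) ∨
    (∃ φ : Multiplicative (ZMod 2) →*
        MulAut (Multiplicative (ZMod 3) × alternatingGroup (Fin 4)),
      Nonempty (G ≃* (Multiplicative (ZMod 3) × alternatingGroup (Fin 4)) ⋊[φ]
        Multiplicative (ZMod 2))) := by
  obtain ⟨c, hc⟩ := exists_isSexticCore horders hthree hexists
  by_cases hI : (commutingInvolutions c).Pairwise Commute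
  case neg =>
    simp only [Set.Pairwise, not_forall] at hI
    obtain ⟨s, hs, t, ht, -, hst⟩ := hI
    exact .inr (.inl (hc.nonempty_mulEquiv_zmod_three_prod_perm hs ht hst))
  by_cases hquaternion : (∀ x : G, orderOf x = 2 → Commute c x) ∧ ∃ g, ¬ Commute c g
  · obtain ⟨hinv, g, hg⟩ := hquaternion
    exact .inr (.inr (.inl (hc.nonempty_mulEquiv_zmod_two_prod_quaternionGroup hinv hg hI)))
  have hsplit : (∃ x : G, orderOf x = 2 ∧ ¬ Commute c x) ∨ ∀ g : G, Commute c g := by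
    simpa only [not_and_or, not_forall, not_exists, not_not, exists_prop] using hquaternion
  by_cases hCI : Subgroup.centralizer {c} ≤ Subgroup.centralizer (commutingInvolutions c)
  · obtain ⟨e⟩ := hc.nonempty_centralizer_mulEquiv_zmod_six_prod_zmod_two hCI
    obtain ⟨⟨f⟩⟩ | h := hc.nonempty_mulEquiv_or_exists_semidirectProduct e hsplit
    · exact .inl ⟨f.trans MulEquiv.prodComm⟩
    · exact .inr (.inr (.inr (.inl h)))
  · simp only [SetLike.not_le_iff_exists, Subgroup.mem_centralizer_iff, not_forall] at hCI
    obtain ⟨q, hq, s, hs, hqs⟩ := hCI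
    obtain ⟨e⟩ := hc.nonempty_centralizer_mulEquiv_zmod_three_prod_alternatingGroup hI (hq c rfl) hs
      (fun h => hqs h.symm.eq)
    obtain h | h := hc.nonempty_mulEquiv_or_exists_semidirectProduct e hsplit
    · exact .inr (.inr (.inr (.inr (.inr (.inl h)))))
    · exact .inr (.inr (.inr (.inr (.inr (.inr h)))))

/-- Let `G` be a finite group with `π_e(G) ⊆ {1,2,3,4,6}` which has exactly three cyclic
subgroups of order 6, two of which intersect in a subgroup of order 3. Then `G` is
isomorphic to `Z_2 × Z_6`, `Z_3 × S_3`, `Z_2 × Dic_3`, `(Z_6 × Z_2) ⋊_φ Z_2`,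
`Z_2 × Z_2 × S_3`, `Z_3 × A_4` or `(Z_3 × A_4) ⋊_φ Z_2`. -/
theorem classification_of_groups_with_three_cyclic_subgroups_of_order_six
    (G : Type) [Group G] [Finite G]
    (horders : ∀ g : G, orderOf g ∈ ({1, 2, 3, 4, 6} : Set ℕ))
    (hthree : {H : Subgroup G | IsCyclic H ∧ Nat.card H = 6}.ncard = 3)
    (hexists : ∃ H K : Subgroup G, IsCyclic H ∧ Nat.card H = 6 ∧ IsCyclic K ∧
      Nat.card K = 6 ∧ H ≠ K ∧ Nat.card (H ⊓ K : Subgroup G) = 3) :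
    Nonempty (G ≃* Multiplicative (ZMod 2) × Multiplicative (ZMod 6)) ∨
    Nonempty (G ≃* Multiplicative (ZMod 3) × Equiv.Perm (Fin 3)) ∨
    Nonempty (G ≃* Multiplicative (ZMod 2) × QuaternionGroup 3) ∨
    (∃ φ : Multiplicative (ZMod 2) →*
        MulAut (Multiplicative (ZMod 6) × Multiplicative (ZMod 2)),
      Nonempty (G ≃* (Multiplicative (ZMod 6) × Multiplicative (ZMod 2)) ⋊[φ]
        Multiplicative (ZMod 2))) ∨
    Nonempty (G ≃* Multiplicative (ZMod 2) × Multiplicative (ZMod 2) × Equiv.Perm (Fin 3)) ∨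
    Nonempty (G ≃* Multiplicative (ZMod 3) × alternatingGroup (Fin 4)) ∨
    (∃ φ : Multiplicative (ZMod 2) →*
        MulAut (Multiplicative (ZMod 3) × alternatingGroup (Fin 4)),
      Nonempty (G ≃* (Multiplicative (ZMod 3) × alternatingGroup (Fin 4)) ⋊[φ]
        Multiplicative (ZMod 2))) :=
  classification_of_groups_with_three_cyclic_subgroups_of_order_six_general
    G horders hthree hexists
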